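/- arXiv:1410.0038 — 9 statements merged into one kernel-verified Lean document; each statement's English description precedes it below -/
import Mathlib

section
/- For all natural numbers a, b, n, the number of pairs (c,d) ∈ C_cl(a,b) with c + d = n equals f(n − a − b − 3), the number of ways to write n − a − b − 3 as x + 2y with x, y ∈ ℕ. -/
/-- The set `C(a,b) = {(c,d) ∈ ℕ² : c ≡ a (mod 2), and if c = 0 then d ≡ b (mod 2)}`. -/
def Cset (a b : ℕ) : Set (ℕ × ℕ) :=
  {p | p.1 % 2 = a % 2 ∧ (p.1 = 0 → p.2 % 2 = b % 2)}

/-- The region `C_{G/B}(a,b)`. -/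
def CGB (a b : ℕ) : Set (ℕ × ℕ) := {p ∈ Cset a b | p.1 ≤ a ∧ p.2 ≤ b}

/-- The region `C_{O1}(a,b)`. -/
def CO1 (a b : ℕ) : Set (ℕ × ℕ) := {p ∈ Cset a b | a < p.1 ∧ p.2 ≤ b}

/-- The region `C_{O2}(a,b)`. -/
def CO2 (a b : ℕ) : Set (ℕ × ℕ) := {p ∈ Cset a b | p.1 ≤ a ∧ b < p.2}

/-- The region `C_cl(a,b) = C_{O1 ∩ O2}(a,b)`. -/
def Ccl (a b : ℕ) : Set (ℕ × ℕ) := {p ∈ Cset a b | a < p.1 ∧ b < p.2}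

/-- The vector partition function on `{1,2}`: the number of ways to write `m`
as `x + 2y` with `x, y ∈ ℕ`.  It vanishes for `m < 0`. -/
noncomputable def f (m : ℤ) : ℕ := Set.ncard {q : ℕ × ℕ | (q.1 : ℤ) + 2 * q.2 = m}

theorem lt_and_modEq_iff_exists {m a c : ℕ} (hm : 0 < m) :
    a < c ∧ c ≡ a [MOD m] ↔ ∃ k, c = a + m * (k + 1) := by
  constructor
  · rintro ⟨hlt, hmod⟩
    obtain ⟨j, hj⟩ := (Nat.modEq_iff_dvd' hlt.le).mp hmod.symm
    have hj0 : j ≠ 0 := by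
      rintro rfl
      omega
    obtain ⟨k, rfl⟩ := Nat.exists_eq_succ_of_ne_zero hj0
    exact ⟨k, by rw [← Nat.succ_eq_add_one, ← hj, Nat.add_sub_cancel' hlt.le]⟩
  · rintro ⟨k, rfl⟩
    exact ⟨Nat.lt_add_of_pos_right (by positivity), Nat.add_mul_mod_self_left a m (k + 1)⟩

-- On this region the clause of `Cset` about `c = 0` is vacuous, since `a < c`.
theorem mem_Ccl_iff {a b : ℕ} {p : ℕ × ℕ} :
    p ∈ Ccl a b ↔ (a < p.1 ∧ p.1 ≡ a [MOD 2]) ∧ b < p.2 := by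
  constructor
  · rintro ⟨⟨hmod, -⟩, ha, hb⟩
    exact ⟨⟨ha, hmod⟩, hb⟩
  · rintro ⟨⟨ha, hmod⟩, hb⟩
    exact ⟨⟨hmod, fun h => absurd h (Nat.ne_zero_of_lt ha)⟩, ha, hb⟩

/-- The parametrization `(x, y) ↦ (a + 2(y + 1), b + x + 1)` of `C_cl(a,b)` by `ℕ²`. The
coordinates are swapped so that `c + d` grows by `x + 2y`, matching the arguments counted by `f`. -/
def cclParam (a b : ℕ) (q : ℕ × ℕ) : ℕ × ℕ := (a + 2 * (q.2 + 1), b + q.1 + 1)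

theorem cclParam_injective (a b : ℕ) : Function.Injective (cclParam a b) := by
  rintro ⟨x, y⟩ ⟨x', y'⟩ h
  simp only [cclParam, Prod.mk.injEq] at h ⊢
  omega

theorem range_cclParam (a b : ℕ) : Set.range (cclParam a b) = Ccl a b := by
  ext ⟨c, d⟩
  rw [mem_Ccl_iff, lt_and_modEq_iff_exists two_pos]
  constructor
  · rintro ⟨⟨x, y⟩, h⟩
    obtain ⟨rfl, rfl⟩ := Prod.mk.inj h
    exact ⟨⟨y, rfl⟩, by omega⟩
  · rintro ⟨⟨y, rfl⟩, hb⟩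
    obtain ⟨x, rfl⟩ := Nat.exists_eq_add_of_lt hb
    exact ⟨(x, y), rfl⟩

theorem cclParam_fst_add_snd (a b : ℕ) (q : ℕ × ℕ) :
    (cclParam a b q).1 + (cclParam a b q).2 = q.1 + 2 * q.2 + (a + b + 3) := by
  simp only [cclParam]
  ring

/-- The number of points of `C_cl(a,b)` on the line `c + d = n` is the
vector partition function `f` evaluated at `n - a - b - 3`. -/
theorem Ccl_fiber_card (a b n : ℕ) :
    Set.ncard {p ∈ Ccl a b | p.1 + p.2 = n} = f ((n : ℤ) - a - b - 3) := by
  have hsub : {p ∈ Ccl a b | p.1 + p.2 = n} ⊆ Set.range (cclParam a b) :=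
    (Set.sep_subset _ _).trans (range_cclParam a b).superset
  have hpre : cclParam a b ⁻¹' {p ∈ Ccl a b | p.1 + p.2 = n} =
      {q : ℕ × ℕ | (q.1 : ℤ) + 2 * q.2 = (n : ℤ) - a - b - 3} := by
    ext q
    have hmem : cclParam a b q ∈ Ccl a b := range_cclParam a b ▸ Set.mem_range_self q
    simp only [Set.mem_preimage, Set.mem_ofPred_eq, hmem, true_and, cclParam_fst_add_snd]
    omega
  rw [f, ← hpre, Set.ncard_preimage_of_injective_subset_range (cclParam_injective a b) hsub]
end

section
/- For all natural numbers a, b, n, the number of pairs (c,d) ∈ C_{O1}(a,b) with c + d = n equals the number of integers j ≥ 1 with n − a − b ≤ 2j ≤ n − a. -/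
/-- The indices `j` of the points `(a + 2j, n - a - 2j)` of `CO1 a b` on the line `c + d = n`. They
are taken in `ℕ`, with the inequalities arranged so that no subtraction occurs. -/
def CO1FiberIndex (a b n : ℕ) : Set ℕ := {j | 1 ≤ j ∧ n ≤ a + b + 2 * j ∧ a + 2 * j ≤ n}

-- Since `c > a ≥ 0`, the parity condition at `c = 0` in `Cset` is vacuous here.
theorem mem_CO1_iff_exists {a b : ℕ} {p : ℕ × ℕ} :
    p ∈ CO1 a b ↔ (∃ j, 1 ≤ j ∧ p.1 = a + 2 * j) ∧ p.2 ≤ b := by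
  constructor
  · rintro ⟨⟨hparity, -⟩, hlt, hle⟩
    exact ⟨⟨(p.1 - a) / 2, by omega, by omega⟩, hle⟩
  · rintro ⟨⟨j, hj, hfst⟩, hle⟩
    exact ⟨⟨by omega, fun hzero ↦ by omega⟩, by omega, hle⟩

theorem CO1_fiber_eq_image (a b n : ℕ) :
    {p ∈ CO1 a b | p.1 + p.2 = n} =
      (fun j ↦ (a + 2 * j, n - (a + 2 * j))) '' CO1FiberIndex a b n := by
  ext ⟨c, d⟩
  constructor
  · rintro ⟨hmem, hsum : c + d = n⟩
    obtain ⟨⟨j, hj, hc : c = a + 2 * j⟩, hd : d ≤ b⟩ := mem_CO1_iff_exists.mp hmem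
    exact ⟨j, ⟨hj, by omega, by omega⟩, Prod.ext hc.symm (by dsimp only; omega)⟩
  · rintro ⟨j, ⟨hj, hlower, hupper⟩, hpoint⟩
    obtain ⟨rfl, rfl⟩ := Prod.mk.inj hpoint
    exact ⟨mem_CO1_iff_exists.mpr ⟨⟨j, hj, rfl⟩, by dsimp only; omega⟩, Nat.add_sub_of_le hupper⟩

theorem ncard_CO1_fiber_eq_ncard_index (a b n : ℕ) :
    {p ∈ CO1 a b | p.1 + p.2 = n}.ncard = (CO1FiberIndex a b n).ncard := by
  have fst_injective : Function.Injective fun j ↦ a + 2 * j := fun i j hij ↦ by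
    dsimp only at hij
    omega
  rw [CO1_fiber_eq_image]
  exact Set.ncard_image_of_injective _ fun _ _ h ↦ fst_injective (congrArg Prod.fst h)

theorem image_cast_CO1FiberIndex (a b n : ℕ) :
    ((↑) : ℕ → ℤ) '' CO1FiberIndex a b n =
      {j : ℤ | 1 ≤ j ∧ (n : ℤ) - a - b ≤ 2 * j ∧ 2 * j ≤ (n : ℤ) - a} := by
  ext j
  constructor
  · rintro ⟨i, ⟨hi, hlower, hupper⟩, rfl⟩
    exact ⟨by omega, by omega, by omega⟩
  · rintro ⟨hj, hlower, hupper⟩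
    lift j to ℕ using by omega
    exact ⟨j, ⟨by omega, by omega, by omega⟩, rfl⟩

/-- The number of points of `C_{O1}(a,b)` on the line `c + d = n` equals the
number of integers `j ≥ 1` with `n - a - b ≤ 2j ≤ n - a`. -/
theorem CO1_fiber_card (a b n : ℕ) :
    Set.ncard {p ∈ CO1 a b | p.1 + p.2 = n} =
      Set.ncard {j : ℤ | 1 ≤ j ∧ (n : ℤ) - a - b ≤ 2 * j ∧ 2 * j ≤ (n : ℤ) - a} := by
  rw [ncard_CO1_fiber_eq_ncard_index, ← image_cast_CO1FiberIndex,
    Set.ncard_image_of_injective _ Nat.cast_injective]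
end

section
/- For all natural numbers a and b, the map φ defined by φ(c,d) = (d,c) if d ≡ b (mod 2) and φ(c,d) = (d+1, c−1) otherwise, is a well-defined bijection from C(a,b) onto C(b,a); it satisfies c' + d' = c + d for (c',d') = φ(c,d); and it maps C_{G/B}(a,b) onto C_{G/B}(b,a), C_{O1}(a,b) onto C_{O2}(b,a), C_{O2}(a,b) onto C_{O1}(b,a), and C_cl(a,b) onto C_cl(b,a). -/
/-- The duality map `(c,d) ↦ (d,c)` if `d ≡ b (mod 2)`, `(c,d) ↦ (d+1, c-1)`
otherwise. -/
def phi (b : ℕ) (p : ℕ × ℕ) : ℕ × ℕ :=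
  if p.2 % 2 = b % 2 then (p.2, p.1) else (p.2 + 1, p.1 - 1)

/-!
The maps `phi b` on `C(a,b)` and `phi a` on `C(b,a)` are mutually inverse: the first one swaps when
`d ≡ b` and shifts when `d ≢ b`, and as `c ≡ a` the second one undoes it by the same kind of move.
The shift never crosses the boundary of a region: `d ≢ b` means that `d` and `d + 1` lie on the same
side of `b`, and `c ≡ a` means that `c` and `c - 1` lie on the same side of `a`.
-/

open Set

theorem image_sep_eq_sep {α β : Type*} {f : α → β} {s : Set α} {t : Set β} {P : α → Prop}
    {Q : β → Prop} (hf : f '' s = t) (hPQ : ∀ x ∈ s, Q (f x) ↔ P x) :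
    f '' {x ∈ s | P x} = {y ∈ t | Q y} := by
  have hP : {x ∈ s | P x} = s ∩ f ⁻¹' {y | Q y} :=
    Set.ext fun x => and_congr_right fun hx => (hPQ x hx).symm
  rw [hP, image_inter_preimage, hf]
  rfl

variable {a b : ℕ} {p : ℕ × ℕ}

theorem one_le_fst_of_mem_Cset (hp : p ∈ Cset a b) (hd : ¬p.2 % 2 = b % 2) : 1 ≤ p.1 :=
  Nat.one_le_iff_ne_zero.2 (mt hp.2 hd)

theorem phi_of_mod_eq (hd : p.2 % 2 = b % 2) : phi b p = (p.2, p.1) :=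
  if_pos hd

theorem phi_of_mod_ne (hd : ¬p.2 % 2 = b % 2) : phi b p = (p.2 + 1, p.1 - 1) :=
  if_neg hd

theorem phi_fst_add_snd (hp : p ∈ Cset a b) : (phi b p).1 + (phi b p).2 = p.1 + p.2 := by
  by_cases hd : p.2 % 2 = b % 2
  · rw [phi_of_mod_eq hd, add_comm]
  · have hc : 1 ≤ p.1 := one_le_fst_of_mem_Cset hp hd
    rw [phi_of_mod_ne hd]
    omega

theorem phi_fst_le_iff : (phi b p).1 ≤ b ↔ p.2 ≤ b := by
  by_cases hd : p.2 % 2 = b % 2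
  · rw [phi_of_mod_eq hd]
  · rw [phi_of_mod_ne hd]
    omega

theorem phi_snd_le_iff (hc : p.1 % 2 = a % 2) : (phi b p).2 ≤ a ↔ p.1 ≤ a := by
  by_cases hd : p.2 % 2 = b % 2
  · rw [phi_of_mod_eq hd]
  · rw [phi_of_mod_ne hd]
    omega

theorem mapsTo_phi (a b : ℕ) : MapsTo (phi b) (Cset a b) (Cset b a) := by
  intro p hp
  by_cases hd : p.2 % 2 = b % 2
  · rw [phi_of_mod_eq hd]
    exact ⟨hd, fun _ => hp.1⟩
  · rw [phi_of_mod_ne hd]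
    have hsucc : (p.2 + 1) % 2 = b % 2 := by omega
    exact ⟨hsucc, fun h => absurd h p.2.succ_ne_zero⟩

theorem leftInvOn_phi (a b : ℕ) : LeftInvOn (phi a) (phi b) (Cset a b) := by
  intro p hp
  by_cases hd : p.2 % 2 = b % 2
  · rw [phi_of_mod_eq hd]
    exact phi_of_mod_eq hp.1
  · have hc : 1 ≤ p.1 := one_le_fst_of_mem_Cset hp hd
    have hpred : ¬(p.1 - 1) % 2 = a % 2 := by
      have := hp.1
      omega
    calc phi a (phi b p) = phi a (p.2 + 1, p.1 - 1) := by rw [phi_of_mod_ne hd]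
      _ = (p.1 - 1 + 1, p.2 + 1 - 1) := phi_of_mod_ne hpred
      _ = p := by rw [Nat.sub_add_cancel hc, Nat.add_sub_cancel]

theorem bijOn_phi (a b : ℕ) : BijOn (phi b) (Cset a b) (Cset b a) :=
  InvOn.bijOn ⟨leftInvOn_phi a b, leftInvOn_phi b a⟩ (mapsTo_phi a b) (mapsTo_phi b a)

theorem image_phi_CGB (a b : ℕ) : phi b '' CGB a b = CGB b a :=
  image_sep_eq_sep (bijOn_phi a b).image_eq fun _ hp => by
    rw [phi_fst_le_iff, phi_snd_le_iff hp.1, and_comm]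

theorem image_phi_CO1 (a b : ℕ) : phi b '' CO1 a b = CO2 b a :=
  image_sep_eq_sep (bijOn_phi a b).image_eq fun _ hp => by
    rw [phi_fst_le_iff, ← not_le, phi_snd_le_iff hp.1, not_le, and_comm]

theorem image_phi_CO2 (a b : ℕ) : phi b '' CO2 a b = CO1 b a :=
  image_sep_eq_sep (bijOn_phi a b).image_eq fun _ hp => by
    rw [← not_le, phi_fst_le_iff, phi_snd_le_iff hp.1, not_le, and_comm]

theorem image_phi_Ccl (a b : ℕ) : phi b '' Ccl a b = Ccl b a :=
  image_sep_eq_sep (bijOn_phi a b).image_eq fun _ hp => by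
    simp only [← not_le, phi_fst_le_iff, phi_snd_le_iff hp.1, and_comm]

/-- The duality map is well defined (in the second case `c ≥ 1`, so the
natural-number subtraction `c - 1` agrees with integer subtraction), it is a
bijection from `C(a,b)` onto `C(b,a)` preserving `c + d`, and it carries each
of the four regions for `(a,b)` onto the corresponding region for `(b,a)`
(exchanging `O1` and `O2`). -/
theorem C_duality (a b : ℕ) :
    (∀ p ∈ Cset a b, ¬ (p.2 % 2 = b % 2) → 1 ≤ p.1) ∧
    Set.BijOn (phi b) (Cset a b) (Cset b a) ∧
    (∀ p ∈ Cset a b, (phi b p).1 + (phi b p).2 = p.1 + p.2) ∧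
    phi b '' CGB a b = CGB b a ∧
    phi b '' CO1 a b = CO2 b a ∧
    phi b '' CO2 a b = CO1 b a ∧
    phi b '' Ccl a b = Ccl b a :=
  ⟨fun _ => one_le_fst_of_mem_Cset, bijOn_phi a b, fun _ => phi_fst_add_snd, image_phi_CGB a b,
    image_phi_CO1 a b, image_phi_CO2 a b, image_phi_Ccl a b⟩
end

section
/- For all natural numbers a, b, n, the number of pairs (c,d) ∈ C_{O2}(a,b) with c + d = n equals the number of pairs (c',d') ∈ C_{O1}(b,a) with c' + d' = n. -/
/-!
There is a bijection `C(a,b) → C(b,a)` preserving `c + d` and exchanging the roles of the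
inequalities `c ≤ a` and `d ≤ b`. It is `(c, d) ↦ (d, c)` when `d ≡ b (mod 2)`; otherwise the swap
has the wrong parity, which is corrected by moving one unit, `(c, d) ↦ (d + 1, c - 1)`. The unit is
available because `c = 0` forces `d ≡ b`, and moving it does not affect the inequalities because
`c ≡ a` and `d ≢ b`. The inverse is given by the same rule with `a` in place of `b`.
-/

open Set

theorem bijOn_sep {α β : Type*} {f : α → β} {s : Set α} {t : Set β} {P : α → Prop} {Q : β → Prop}
    (hf : BijOn f s t) (hPQ : ∀ x ∈ s, Q (f x) ↔ P x) :
    BijOn f {x ∈ s | P x} {y ∈ t | Q y} := by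
  have hs : {x ∈ s | P x} = s ∩ f ⁻¹' {y ∈ t | Q y} := by
    ext x
    exact and_congr_right fun hx => by simp [hf.mapsTo hx, hPQ x hx]
  rw [hs]
  exact hf.subset_right (sep_subset t Q)

/-- The exchange map `C(a,b) → C(b,a)`: the coordinate swap, followed where needed by the transfer
of one unit that gives the first coordinate the parity of `b`. It depends on `a` only through its
domain `C(a,b)`, on which the truncated subtraction `p.1 - 1` is only applied to `p.1 ≠ 0`. -/
def parityExchange (b : ℕ) (p : ℕ × ℕ) : ℕ × ℕ :=
  if p.2 % 2 = b % 2 then (p.2, p.1) else (p.2 + 1, p.1 - 1)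

section parityExchange

variable {a b : ℕ} {p : ℕ × ℕ}

theorem parityExchange_of_mod_eq (h : p.2 % 2 = b % 2) : parityExchange b p = (p.2, p.1) :=
  if_pos h

theorem parityExchange_of_mod_ne (h : p.2 % 2 ≠ b % 2) :
    parityExchange b p = (p.2 + 1, p.1 - 1) :=
  if_neg h

theorem fst_add_snd_parityExchange (hp : p.1 = 0 → p.2 % 2 = b % 2) :
    (parityExchange b p).1 + (parityExchange b p).2 = p.1 + p.2 := by
  by_cases h : p.2 % 2 = b % 2
  · rw [parityExchange_of_mod_eq h, add_comm]
  · have hpos : 1 ≤ p.1 := Nat.one_le_iff_ne_zero.mpr (mt hp h)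
    rw [parityExchange_of_mod_ne h, add_assoc, Nat.add_sub_cancel' hpos, add_comm]

theorem lt_fst_parityExchange_iff : b < (parityExchange b p).1 ↔ b < p.2 := by
  by_cases h : p.2 % 2 = b % 2
  · rw [parityExchange_of_mod_eq h]
  · have hne : b ≠ p.2 := fun hb => h (congrArg (· % 2) hb.symm)
    rw [parityExchange_of_mod_ne h, Nat.lt_add_one_iff, hne.le_iff_lt]

theorem snd_parityExchange_le_iff (hp : p.1 % 2 = a % 2) :
    (parityExchange b p).2 ≤ a ↔ p.1 ≤ a := by
  by_cases h : p.2 % 2 = b % 2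
  · rw [parityExchange_of_mod_eq h]
  · have hne : p.1 ≠ a + 1 := by lia
    rw [parityExchange_of_mod_ne h, Nat.sub_le_iff_le_add, hne.le_iff_lt, Nat.lt_add_one_iff]

theorem mapsTo_parityExchange : MapsTo (parityExchange b) (Cset a b) (Cset b a) := by
  rintro p ⟨hfst, -⟩
  by_cases h : p.2 % 2 = b % 2
  · rw [parityExchange_of_mod_eq h]
    exact ⟨h, fun _ => hfst⟩
  · have hflip : (p.2 + 1) % 2 = b % 2 := by lia
    rw [parityExchange_of_mod_ne h]
    exact ⟨hflip, fun hzero => absurd hzero p.2.succ_ne_zero⟩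

theorem leftInvOn_parityExchange :
    LeftInvOn (parityExchange a) (parityExchange b) (Cset a b) := by
  rintro p ⟨hfst, hsnd⟩
  by_cases h : p.2 % 2 = b % 2
  · rw [parityExchange_of_mod_eq h, parityExchange_of_mod_eq hfst]
  · have hpos : 1 ≤ p.1 := Nat.one_le_iff_ne_zero.mpr (mt hsnd h)
    have hflip : (p.1 - 1) % 2 ≠ a % 2 := by lia
    rw [parityExchange_of_mod_ne h, parityExchange_of_mod_ne hflip, Nat.sub_add_cancel hpos,
      Nat.add_sub_cancel]

theorem bijOn_parityExchange (a b : ℕ) : BijOn (parityExchange b) (Cset a b) (Cset b a) :=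
  InvOn.bijOn ⟨leftInvOn_parityExchange, leftInvOn_parityExchange⟩
    mapsTo_parityExchange mapsTo_parityExchange

theorem bijOn_parityExchange_CO2_CO1 (a b : ℕ) :
    BijOn (parityExchange b) (CO2 a b) (CO1 b a) :=
  bijOn_sep (bijOn_parityExchange a b) fun _ hp =>
    (and_congr lt_fst_parityExchange_iff (snd_parityExchange_le_iff hp.1)).trans and_comm

end parityExchange

/-- The number of points of `C_{O2}(a,b)` on the line `c + d = n` equals the
number of points of `C_{O1}(b,a)` on that line. -/
theorem CO2_fiber_card_eq_CO1 (a b n : ℕ) :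
    Set.ncard {p ∈ CO2 a b | p.1 + p.2 = n} =
      Set.ncard {p ∈ CO1 b a | p.1 + p.2 = n} := by
  have hfiber : BijOn (parityExchange b) {p ∈ CO2 a b | p.1 + p.2 = n}
      {p ∈ CO1 b a | p.1 + p.2 = n} :=
    bijOn_sep (bijOn_parityExchange_CO2_CO1 a b) fun p hp => by
      rw [fst_add_snd_parityExchange hp.1.2]
  exact hfiber.ncard_eq
end

section
/- For all natural numbers a, b, n, the number of pairs (c,d) ∈ C_{O2}(a,b) with c + d = n equals the number of integers j ≥ 1 with n − a − b ≤ 2j ≤ n − b. -/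
/-!
A point `(c, d)` with `c ≡ a (mod 2)` on the line `c + d = n` is sent to `j = ⌈(d - b) / 2⌉`, so
that `2j` is `d - b` rounded up to an even number. The other three conditions of `C_{O2}(a, b)`
become, one by one, the three inequalities on `j`: `b < d` is `1 ≤ j`; `c ≤ a` is `n - a - b ≤ 2j`,
because `c - a` is even and the rounding adds at most one; and the parity condition at `c = 0` is
`2j ≤ n - b`, which says that the rounding adds at most `c`. Since `c ≡ a (mod 2)` also fixes the
parity of `d`, the point can be recovered from `j`.
-/

/-- The rounded half-distance `⌈(d - b) / 2⌉`, the parameter `j` of a point `(c, d)` of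
`C_{O2}(a, b)`; the ceiling is encoded as the floor division of `d - b + 1` by `2`. -/
def halfGap (b d : ℤ) : ℤ :=
  (d - b + 1) / 2

theorem two_mul_halfGap (b d : ℤ) : 2 * halfGap b d = d - b + (d - b) % 2 := by
  unfold halfGap
  omega

theorem one_le_halfGap_iff {b d : ℤ} : 1 ≤ halfGap b d ↔ b < d := by
  have := two_mul_halfGap b d
  omega

theorem sub_le_two_mul_halfGap_iff {a b c d : ℤ} (hc : c % 2 = a % 2) :
    c + d - a - b ≤ 2 * halfGap b d ↔ c ≤ a := by
  rw [two_mul_halfGap]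
  omega

theorem two_mul_halfGap_le_iff {b c d : ℤ} (hc : 0 ≤ c) :
    2 * halfGap b d ≤ c + d - b ↔ (c = 0 → d % 2 = b % 2) := by
  rw [two_mul_halfGap]
  omega

theorem eq_of_halfGap_eq {b d d' : ℤ} (hd : d % 2 = d' % 2) (h : halfGap b d = halfGap b d') :
    d = d' := by
  have := two_mul_halfGap b d
  have := two_mul_halfGap b d'
  omega

theorem mem_CO2_iff_halfGap {a b c d : ℕ} (hc : c % 2 = a % 2) :
    (c, d) ∈ CO2 a b ↔
      1 ≤ halfGap b d ∧ (c : ℤ) + d - a - b ≤ 2 * halfGap b d ∧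
        2 * halfGap b d ≤ (c : ℤ) + d - b := by
  rw [one_le_halfGap_iff, sub_le_two_mul_halfGap_iff (by omega),
    two_mul_halfGap_le_iff c.cast_nonneg]
  simp only [CO2, Cset, Set.mem_ofPred_eq]
  omega

theorem injOn_halfGap (a b n : ℕ) :
    Set.InjOn (fun p : ℕ × ℕ ↦ halfGap b p.2) {p | p.1 % 2 = a % 2 ∧ p.1 + p.2 = n} := by
  rintro ⟨c, d⟩ ⟨hc, hn⟩ ⟨c', d'⟩ ⟨hc', hn'⟩ h
  have hd : (d : ℤ) = d' := eq_of_halfGap_eq (by omega) h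
  rw [Prod.mk.injEq]
  omega

theorem exists_halfGap_eq (a : ℕ) {b n : ℕ} {j : ℤ} (h_lower : -b < 2 * j)
    (h_upper : 2 * j ≤ n - b) :
    ∃ c d : ℕ, c % 2 = a % 2 ∧ c + d = n ∧ halfGap b d = j := by
  -- The correction `ε` makes `c = n - d` congruent to `a` modulo `2`.
  let ε : ℤ := ((n : ℤ) - a - b) % 2
  obtain ⟨d, hd⟩ : ∃ d : ℕ, (d : ℤ) = b + 2 * j - ε := ⟨_, Int.toNat_of_nonneg (by omega)⟩
  obtain ⟨c, rfl⟩ : ∃ c, n = c + d := Nat.exists_eq_add_of_le' (by omega)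
  have := two_mul_halfGap b d
  exact ⟨c, d, by omega, rfl, by omega⟩

theorem bijOn_halfGap (a b n : ℕ) :
    Set.BijOn (fun p : ℕ × ℕ ↦ halfGap b p.2) {p ∈ CO2 a b | p.1 + p.2 = n}
      {j : ℤ | 1 ≤ j ∧ (n : ℤ) - a - b ≤ 2 * j ∧ 2 * j ≤ (n : ℤ) - b} := by
  refine ⟨?mapsTo, ?injOn, ?surjOn⟩
  case mapsTo =>
    rintro ⟨c, d⟩ ⟨hp, rfl⟩
    simpa using (mem_CO2_iff_halfGap hp.1.1).mp hp
  case injOn =>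
    refine (injOn_halfGap a b n).mono ?_
    rintro p ⟨hp, hn⟩
    exact ⟨hp.1.1, hn⟩
  case surjOn =>
    rintro j ⟨hj, hj_lower, hj_upper⟩
    obtain ⟨c, d, hc, rfl, rfl⟩ := exists_halfGap_eq a (by omega) hj_upper
    push_cast at hj_lower hj_upper
    exact ⟨(c, d), ⟨(mem_CO2_iff_halfGap hc).mpr ⟨hj, hj_lower, hj_upper⟩, rfl⟩, rfl⟩

/-- The number of points of `C_{O2}(a,b)` on the line `c + d = n` equals the
number of integers `j ≥ 1` with `n - a - b ≤ 2j ≤ n - b`. -/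
theorem CO2_fiber_card (a b n : ℕ) :
    Set.ncard {p ∈ CO2 a b | p.1 + p.2 = n} =
      Set.ncard {j : ℤ | 1 ≤ j ∧ (n : ℤ) - a - b ≤ 2 * j ∧ 2 * j ≤ (n : ℤ) - b} :=
  (bijOn_halfGap a b n).ncard_eq
end

section
/- For all natural numbers a, b, n, one has f(a + b − n) = f(a − 1 − n) + f(b − 1 − n) + #{(c,d) ∈ C_{G/B}(a,b) : c + d = n}. (Equivalently, the alternating sum f(a+b−n) − f(a−1−n) − f(b−1−n) arising from the Weyl-group sum over S₂ inside S₃ is nonnegative and counts lattice points of C_{G/B}(a,b) on the line c + d = n.) -/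
/-! A point `(c, d)` on the line `c + d = n` with `c ≤ a`, `d ≤ b` and `c ≡ a (mod 2)` is recorded
by its slacks `x = b - d` and `y = (a - c) / 2`, which satisfy `x + 2y = a + b - n`. If `c` and `d`
may be negative, every solution in `ℕ²` of this equation arises. A solution fails to give a point of
`C_{G/B}(a,b)` in one of two ways, which exclude each other because `x > b` and `2y ≥ a` would force
`x + 2y > a + b`. The solutions with `d < 0` are those with `x > b`, and translating `x` by `b + 1`
shows that `f (a - 1 - n)` counts them. Those with `c < 0`, or with `c = 0` and `d ≢ b (mod 2)`, are
the solutions with `y ≥ k` for some `k`. Translating `y` by `k` shows that `f (a + b - n - 2k)`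
counts them. This argument is `b - 1 - n`, up to a shift from an even number to its successor or
back, and such a shift does not change `f`. -/

lemma ncard_sep_add_ncard_sep_add_ncard_sep_not {α : Type*} {s : Set α} (hs : s.Finite)
    {p q : α → Prop} (hpq : ∀ x ∈ s, p x → ¬q x) :
    {x ∈ s | p x}.ncard + {x ∈ s | q x}.ncard + {x ∈ s | ¬p x ∧ ¬q x}.ncard = s.ncard := by
  have hdisj : Disjoint {x ∈ s | p x} {x ∈ s | q x} := by grind
  have hdisj' : Disjoint ({x ∈ s | p x} ∪ {x ∈ s | q x}) {x ∈ s | ¬p x ∧ ¬q x} := by grind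
  rw [← Set.ncard_union_eq hdisj (hs.sep p) (hs.sep q),
    ← Set.ncard_union_eq hdisj' ((hs.sep p).union (hs.sep q)) (hs.sep _)]
  congr 1
  ext x
  grind

/-- The partitions of `m` into parts `1` and `2`, encoded as pairs of multiplicities `(x, y)` with
`x + 2y = m`. -/
def oneTwoPartitions (m : ℤ) : Set (ℕ × ℕ) := {q | (q.1 : ℤ) + 2 * q.2 = m}

lemma mem_oneTwoPartitions {m : ℤ} {x y : ℕ} :
    (x, y) ∈ oneTwoPartitions m ↔ (x : ℤ) + 2 * y = m := Iff.rfl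

lemma ncard_oneTwoPartitions (m : ℤ) : (oneTwoPartitions m).ncard = f m := rfl

lemma finite_oneTwoPartitions (m : ℤ) : (oneTwoPartitions m).Finite := by
  refine (Set.finite_Iic (m.toNat, m.toNat)).subset ?_
  rintro ⟨x, y⟩ h
  rw [mem_oneTwoPartitions] at h
  exact Prod.mk_le_mk.2 ⟨by omega, by omega⟩

lemma image_add_oneTwoPartitions (m : ℤ) (k : ℕ × ℕ) :
    (· + k) '' oneTwoPartitions m =
      {q ∈ oneTwoPartitions (m + k.1 + 2 * k.2) | k ≤ q} := by
  obtain ⟨i, j⟩ := k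
  ext ⟨x, y⟩
  simp only [Set.mem_image, Prod.exists, mem_oneTwoPartitions, Prod.mk_add_mk, Prod.mk.injEq,
    Set.mem_ofPred_eq, Prod.mk_le_mk]
  constructor
  · rintro ⟨x', y', h, rfl, rfl⟩
    omega
  · rintro ⟨h, hi, hj⟩
    exact ⟨x - i, y - j, by omega, by omega, by omega⟩

lemma ncard_oneTwoPartitions_ge (m : ℤ) (k : ℕ × ℕ) :
    {q ∈ oneTwoPartitions m | k ≤ q}.ncard = f (m - k.1 - 2 * k.2) := by
  have h := image_add_oneTwoPartitions (m - k.1 - 2 * k.2) k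
  rw [show m - k.1 - 2 * k.2 + k.1 + 2 * k.2 = m by ring] at h
  rw [← h, Set.ncard_image_of_injective _ (add_left_injective k), ncard_oneTwoPartitions]

lemma ncard_oneTwoPartitions_fst_gt (m : ℤ) (i : ℕ) :
    {q ∈ oneTwoPartitions m | i < q.1}.ncard = f (m - i - 1) := by
  have h := ncard_oneTwoPartitions_ge m (i + 1, 0)
  simpa [Prod.le_def, Nat.succ_le_iff, sub_sub] using h

lemma ncard_oneTwoPartitions_snd_ge (m : ℤ) (j : ℕ) :
    {q ∈ oneTwoPartitions m | j ≤ q.2}.ncard = f (m - 2 * j) := by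
  have h := ncard_oneTwoPartitions_ge m (0, j)
  simpa [Prod.le_def] using h

lemma f_add_one_of_even {m : ℤ} (hm : Even m) : f (m + 1) = f m := by
  -- A partition of an odd number has at least one part equal to `1`.
  have h_pos : {q ∈ oneTwoPartitions (m + 1) | 0 < q.1} = oneTwoPartitions (m + 1) := by
    refine Set.sep_eq_self_iff_mem_true.2 ?_
    rintro ⟨x, y⟩ hq
    rw [mem_oneTwoPartitions] at hq
    grind
  have h_card := ncard_oneTwoPartitions_fst_gt (m + 1) 0
  rw [h_pos, ncard_oneTwoPartitions] at h_card
  simpa using h_card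

/-- The solutions `q = (x, y)` whose point `(c, d) = (a - 2y, b - x)`, computed in `ℤ`, violates the
conditions on the first coordinate in `C_{G/B}(a,b)`: `c < 0`, or `c = 0` and `d ≢ b (mod 2)`. -/
def BeyondWall (a : ℕ) (q : ℕ × ℕ) : Prop := a < 2 * q.2 ∨ 2 * q.2 = a ∧ Odd q.1

lemma ncard_oneTwoPartitions_beyondWall_of_threshold {m : ℤ} {a k : ℕ}
    (hk : ∀ q ∈ oneTwoPartitions m, BeyondWall a q ↔ k ≤ q.2) :
    {q ∈ oneTwoPartitions m | BeyondWall a q}.ncard = f (m - 2 * k) := by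
  rw [← ncard_oneTwoPartitions_snd_ge]
  congr 1
  ext q
  exact and_congr_right (hk q)

lemma ncard_oneTwoPartitions_beyondWall (m : ℤ) (a : ℕ) :
    {q ∈ oneTwoPartitions m | BeyondWall a q}.ncard = f (m - a - 1) := by
  rcases a.even_or_odd' with ⟨e, rfl | rfl⟩
  · rcases m.even_or_odd with hm | hm
    · have hk : ∀ q ∈ oneTwoPartitions m, BeyondWall (2 * e) q ↔ e + 1 ≤ q.2 := by
        grind [oneTwoPartitions, BeyondWall]
      have heven : Even (m - 2 * (e + 1 : ℕ)) := hm.sub (even_two_mul _)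
      rw [ncard_oneTwoPartitions_beyondWall_of_threshold hk, ← f_add_one_of_even heven]
      congr 1
      push_cast
      ring
    · have hk : ∀ q ∈ oneTwoPartitions m, BeyondWall (2 * e) q ↔ e ≤ q.2 := by
        grind [oneTwoPartitions, BeyondWall]
      have heven : Even (m - (2 * e : ℕ) - 1) := by grind
      rw [ncard_oneTwoPartitions_beyondWall_of_threshold hk, ← f_add_one_of_even heven]
      congr 1
      push_cast
      ring
  · have hk : ∀ q ∈ oneTwoPartitions m, BeyondWall (2 * e + 1) q ↔ e + 1 ≤ q.2 := by
      grind [BeyondWall]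
    rw [ncard_oneTwoPartitions_beyondWall_of_threshold hk]
    congr 1
    push_cast
    ring

lemma ncard_CGB_fiber (a b n : ℕ) :
    {p ∈ CGB a b | p.1 + p.2 = n}.ncard =
      {q ∈ oneTwoPartitions ((a : ℤ) + b - n) | ¬b < q.1 ∧ ¬BeyondWall a q}.ncard := by
  -- No subtraction truncates: `c ≤ a` and `d ≤ b` on the left, `x ≤ b` and `2y ≤ a` on the right.
  -- The division by `2` is exact because `c ≡ a (mod 2)`.
  let slack (p : ℕ × ℕ) : ℕ × ℕ := (b - p.2, (a - p.1) / 2)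
  let point (q : ℕ × ℕ) : ℕ × ℕ := (a - 2 * q.2, b - q.1)
  refine (Set.InvOn.bijOn (f := slack) (f' := point) ⟨?_, ?_⟩ ?_ ?_).ncard_eq <;>
    rintro ⟨u, v⟩ h <;>
    simp only [slack, point, CGB, Cset, BeyondWall, mem_oneTwoPartitions, Set.mem_ofPred_eq,
      Prod.mk.injEq, Nat.odd_iff] at h ⊢ <;>
    omega

lemma not_beyondWall_of_fst_gt {a b n : ℕ} {q : ℕ × ℕ}
    (hq : q ∈ oneTwoPartitions ((a : ℤ) + b - n)) (hb : b < q.1) : ¬BeyondWall a q := by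
  grind [oneTwoPartitions, BeyondWall]

/-- The alternating sum `f(a+b-n) - f(a-1-n) - f(b-1-n)` is nonnegative and
counts the points of `C_{G/B}(a,b)` on the line `c + d = n`. -/
theorem CGB_fiber_card (a b n : ℕ) :
    f ((a : ℤ) + b - n) =
      f ((a : ℤ) - 1 - n) + f ((b : ℤ) - 1 - n) +
        Set.ncard {p ∈ CGB a b | p.1 + p.2 = n} := by
  have hdisj := fun q ↦ not_beyondWall_of_fst_gt (a := a) (b := b) (n := n) (q := q)
  rw [ncard_CGB_fiber, ← ncard_oneTwoPartitions ((a : ℤ) + b - n),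
    ← ncard_sep_add_ncard_sep_add_ncard_sep_not (finite_oneTwoPartitions _) hdisj,
    ncard_oneTwoPartitions_fst_gt, ncard_oneTwoPartitions_beyondWall]
  congr 3 <;> ring
end

section
/- For all integers a, n and every natural number b, the number of pairs (c,d) ∈ ℤ² with c ≤ a, c ≡ a (mod 2), 0 ≤ d ≤ b, and c + d = n equals f(a + b − n) − f(a − 1 − n). -/
/-!
Writing `c = a - k * y` and `d = b - x` turns the pairs in the strip with `c + d = n` into the
representations `x + k * y = a + b - n` with `x ≤ b`. Among all representations of `a + b - n`,
those with `b + 1 ≤ x` become, after subtracting `b + 1` from `x`, the representations of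
`a - 1 - n`.
-/

/-- The representations `m = x + k * y` with `x, y ∈ ℕ`. Their number is the vector partition
function on `{1,k}`, which is `f` for `k = 2`; the weight `k` is an integer so that this
identification is definitional. -/
def weightedPairs (k m : ℤ) : Set (ℕ × ℕ) := {q | (q.1 : ℤ) + k * q.2 = m}

lemma finite_weightedPairs {k : ℤ} (hk : 0 < k) (m : ℤ) : (weightedPairs k m).Finite := by
  refine (Set.finite_Iic (m.toNat, m.toNat)).subset ?_
  rintro ⟨x, y⟩ (hxy : (x : ℤ) + k * y = m)
  have hy : (y : ℤ) ≤ k * y := le_mul_of_one_le_left y.cast_nonneg hk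
  exact Prod.mk_le_mk.2 ⟨by omega, by omega⟩

lemma image_add_weightedPairs (k m : ℤ) (s : ℕ) :
    (fun q : ℕ × ℕ ↦ (q.1 + s, q.2)) '' weightedPairs k m =
      {q ∈ weightedPairs k (m + s) | s ≤ q.1} := by
  ext ⟨x, y⟩
  simp only [weightedPairs, Set.mem_image, Set.mem_ofPred_eq, Prod.exists, Prod.mk.injEq]
  constructor
  · rintro ⟨u, v, huv, rfl, rfl⟩
    exact ⟨by push_cast; linarith, Nat.le_add_left s u⟩
  · rintro ⟨hxy, hs⟩
    exact ⟨x - s, y, by push_cast [hs]; linarith, Nat.sub_add_cancel hs, rfl⟩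

lemma ncard_weightedPairs_ge (k m : ℤ) (s : ℕ) :
    {q ∈ weightedPairs k m | s ≤ q.1}.ncard = (weightedPairs k (m - s)).ncard := by
  have shift_injective : Function.Injective (fun q : ℕ × ℕ ↦ (q.1 + s, q.2)) :=
    (add_left_injective s).prodMap Function.injective_id
  rw [← Set.ncard_image_of_injective (weightedPairs k (m - s)) shift_injective,
    image_add_weightedPairs, sub_add_cancel]

lemma ncard_weightedPairs_lt_add {k : ℤ} (hk : 0 < k) (m : ℤ) (s : ℕ) :
    {q ∈ weightedPairs k m | q.1 < s}.ncard + (weightedPairs k (m - s)).ncard =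
      (weightedPairs k m).ncard := by
  have sdiff_eq : weightedPairs k m \ {q | q.1 < s} = {q ∈ weightedPairs k m | s ≤ q.1} := by
    ext q
    simp only [Set.mem_sdiff, Set.mem_ofPred_eq, not_lt]
  rw [← ncard_weightedPairs_ge, ← sdiff_eq]
  exact Set.ncard_inter_add_ncard_sdiff_eq_ncard _ _ (finite_weightedPairs hk m)

lemma le_and_emod_eq_iff_exists_sub_mul {k : ℤ} (hk : 0 < k) {a c : ℤ} :
    c ≤ a ∧ c % k = a % k ↔ ∃ y : ℕ, a - k * y = c := by
  constructor
  · rintro ⟨hca, hmod⟩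
    obtain ⟨y, hy⟩ : k ∣ a - c := Int.ModEq.dvd hmod
    have hy_nonneg : 0 ≤ y := nonneg_of_mul_nonneg_right (hy ▸ sub_nonneg.2 hca) hk
    lift y to ℕ using hy_nonneg
    exact ⟨y, by linarith⟩
  · rintro ⟨y, rfl⟩
    exact ⟨sub_le_self a (by positivity), Int.sub_mul_emod_self_left a k y⟩

lemma strip_fiber_eq_image_weightedPairs {k : ℤ} (hk : 0 < k) (a n : ℤ) (b : ℕ) :
    {p : ℤ × ℤ | p.1 ≤ a ∧ p.1 % k = a % k ∧ 0 ≤ p.2 ∧ p.2 ≤ (b : ℤ) ∧ p.1 + p.2 = n} =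
      (fun q : ℕ × ℕ ↦ (a - k * q.2, (b : ℤ) - q.1)) ''
        {q ∈ weightedPairs k (a + b - n) | q.1 < b + 1} := by
  ext ⟨c, d⟩
  simp only [weightedPairs, Set.mem_image, Set.mem_ofPred_eq, Prod.exists, Prod.mk.injEq]
  rw [← and_assoc, le_and_emod_eq_iff_exists_sub_mul hk]
  constructor
  · rintro ⟨⟨y, rfl⟩, hd_nonneg, hdb, hn⟩
    exact ⟨(b - d).toNat, y, ⟨by omega, by omega⟩, rfl, by omega⟩
  · rintro ⟨x, y, ⟨hxy, hxb⟩, rfl, rfl⟩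
    exact ⟨⟨y, rfl⟩, by omega, by omega, by omega⟩

theorem strip_fiber_card_general {k : ℤ} (hk : 0 < k) (a n : ℤ) (b : ℕ) :
    (Set.ncard {p : ℤ × ℤ | p.1 ≤ a ∧ p.1 % k = a % k ∧
        0 ≤ p.2 ∧ p.2 ≤ (b : ℤ) ∧ p.1 + p.2 = n} : ℤ) =
      ((weightedPairs k (a + b - n)).ncard : ℤ) - ((weightedPairs k (a - 1 - n)).ncard : ℤ) := by
  have param_injective :
      Function.Injective (fun q : ℕ × ℕ ↦ (a - k * q.2, (b : ℤ) - q.1)) := by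
    rintro ⟨x, y⟩ ⟨u, v⟩ h
    simpa [hk.ne', and_comm] using h
  have shifted_weight : a + b - n - (b + 1 : ℕ) = a - 1 - n := by
    push_cast
    ring
  rw [strip_fiber_eq_image_weightedPairs hk, Set.ncard_image_of_injective _ param_injective,
    ← shifted_weight, ← ncard_weightedPairs_lt_add hk (a + b - n) (b + 1), Nat.cast_add,
    add_sub_cancel_right]

/-- The number of `(c,d) ∈ ℤ²` with `c ≤ a`, `c ≡ a (mod 2)`, `0 ≤ d ≤ b` and
`c + d = n` is `f(a + b - n) - f(a - 1 - n)`. -/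
theorem strip_fiber_card (a n : ℤ) (b : ℕ) :
    (Set.ncard {p : ℤ × ℤ | p.1 ≤ a ∧ p.1 % 2 = a % 2 ∧
        0 ≤ p.2 ∧ p.2 ≤ (b : ℤ) ∧ p.1 + p.2 = n} : ℤ) =
      (f (a + b - n) : ℤ) - (f (a - 1 - n) : ℤ) :=
  strip_fiber_card_general two_pos a n b
end

section
/- Let a be an odd natural number and b a natural number. Then, as subsets of ℤ², the set {(c,d) ∈ (a,b)+D : c + d ≥ 0} minus the union ((a,−1)+D) ∪ ((−1,b)+D) equals C_{G/B}(a,b); moreover, on the half-plane {c + d ≥ 0}, both (a,−1)+D and (−1,b)+D are contained in (a,b)+D and are disjoint from each other. -/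
/-- The quadrant `D = {(c,d) ∈ ℤ² : c ≤ 0, d ≤ 0, c even}`. -/
def D : Set (ℤ × ℤ) := {p | p.1 ≤ 0 ∧ p.2 ≤ 0 ∧ p.1 % 2 = 0}

/-- The translate `(p,q) + D`. -/
def tD (v : ℤ × ℤ) : Set (ℤ × ℤ) := (fun p => v + p) '' D

/-- The natural embedding `ℕ² ↪ ℤ²`. -/
def emb (p : ℕ × ℕ) : ℤ × ℤ := ((p.1 : ℤ), (p.2 : ℤ))

/-!
The translate `v + D` consists of the points below `v` in the product order whose first coordinate
has the parity of that of `v`. As `a` is odd, the corners `(a, b)`, `(a, -1)`, `(-1, b)` all give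
the same parity, so only the order matters: removing the two smaller translates cuts `(a, b) + D`
down to the first quadrant, and their intersection is `(-1, -1) + D`, which misses the half-plane
`c + d ≥ 0`.
-/

section Translates

variable {v w x : ℤ × ℤ}

theorem mem_tD : x ∈ tD v ↔ x ≤ v ∧ x.1 ≡ v.1 [ZMOD 2] := by
  simp only [tD, D, Set.image_add_left, Set.mem_preimage, Set.mem_ofPred_eq, Prod.fst_add,
    Prod.snd_add, Prod.fst_neg, Prod.snd_neg, Prod.le_def, Int.ModEq]
  omega

theorem tD_subset_tD (hle : v ≤ w) (hmod : v.1 ≡ w.1 [ZMOD 2]) : tD v ⊆ tD w := by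
  intro x hx
  obtain ⟨hxv, hxmod⟩ := mem_tD.mp hx
  exact mem_tD.mpr ⟨hxv.trans hle, hxmod.trans hmod⟩

theorem tD_inter_tD (hmod : v.1 ≡ w.1 [ZMOD 2]) : tD v ∩ tD w = tD (v ⊓ w) := by
  have hinf : (v ⊓ w).1 ≡ v.1 [ZMOD 2] := by
    rcases min_choice v.1 w.1 with h | h
    · exact congrArg (· % 2) h
    · exact (congrArg (· % 2) h).trans hmod.symm
  ext x
  simp only [Set.mem_inter_iff, mem_tD, le_inf_iff]
  constructor
  · rintro ⟨⟨hv, hxmod⟩, hw, -⟩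
    exact ⟨⟨hv, hw⟩, hxmod.trans hinf.symm⟩
  · rintro ⟨⟨hv, hw⟩, hxmod⟩
    have hxv := hxmod.trans hinf
    exact ⟨⟨hv, hxv⟩, hw, hxv.trans hmod⟩

theorem mem_tD_iff_le_of_mem_tD (hmod : v.1 ≡ w.1 [ZMOD 2]) (hx : x ∈ tD v) :
    x ∈ tD w ↔ x ≤ w :=
  mem_tD.trans (and_iff_left ((mem_tD.mp hx).2.trans hmod))

theorem tD_sdiff_union_tD {p p' : ℤ} (q q' : ℤ) (hmod : p ≡ p' [ZMOD 2]) :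
    tD (p, q) \ (tD (p, q') ∪ tD (p', q)) = {x ∈ tD (p, q) | p' < x.1 ∧ q' < x.2} := by
  ext x
  refine and_congr_right fun hx => ?_
  obtain ⟨hxp, hxq⟩ : x.1 ≤ p ∧ x.2 ≤ q := (mem_tD.mp hx).1
  have hsnd : x ∈ tD (p, q') ↔ x.2 ≤ q' :=
    (mem_tD_iff_le_of_mem_tD (Int.ModEq.refl p) hx).trans (and_iff_right hxp)
  have hfst : x ∈ tD (p', q) ↔ x.1 ≤ p' :=
    (mem_tD_iff_le_of_mem_tD hmod hx).trans (and_iff_left hxq)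
  rw [Set.mem_union, not_or, hsnd, hfst, not_le, not_le, and_comm]

theorem fst_add_snd_le_of_mem_tD (hx : x ∈ tD v) : x.1 + x.2 ≤ v.1 + v.2 :=
  add_le_add (mem_tD.mp hx).1.1 (mem_tD.mp hx).1.2

end Translates

theorem range_emb : Set.range emb = {x | 0 ≤ x.1 ∧ 0 ≤ x.2} := by
  ext ⟨c, d⟩
  constructor
  · rintro ⟨p, hp⟩
    rw [← hp]
    exact ⟨Int.natCast_nonneg p.1, Int.natCast_nonneg p.2⟩
  · rintro ⟨hc, hd⟩
    exact ⟨(c.toNat, d.toNat), Prod.ext (Int.toNat_of_nonneg hc) (Int.toNat_of_nonneg hd)⟩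

theorem emb_mem_tD_emb {p q : ℕ × ℕ} : emb p ∈ tD (emb q) ↔ p ≤ q ∧ p.1 ≡ q.1 [MOD 2] := by
  simp only [mem_tD, emb, Prod.le_def, Nat.cast_le, ← Int.natCast_modEq_iff, Nat.cast_ofNat]

section OddFirstCoordinate

variable {a : ℕ}

theorem mem_Cset_of_odd (b : ℕ) (ha : Odd a) {p : ℕ × ℕ} :
    p ∈ Cset a b ↔ p.1 ≡ a [MOD 2] := by
  refine and_iff_left_of_imp fun hmod hzero => ?_
  have hodd : Odd p.1 := Nat.odd_iff.mpr (hmod.trans (Nat.odd_iff.mp ha))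
  exact absurd hzero hodd.pos.ne'

theorem CGB_eq_preimage_tD (b : ℕ) (ha : Odd a) : CGB a b = emb ⁻¹' tD (a, b) := by
  ext p
  calc p ∈ CGB a b ↔ p ≤ (a, b) ∧ p.1 ≡ a [MOD 2] :=
        (and_congr_left' (mem_Cset_of_odd b ha)).trans and_comm
    _ ↔ emb p ∈ tD (emb (a, b)) := emb_mem_tD_emb.symm

theorem image_emb_CGB (b : ℕ) (ha : Odd a) :
    emb '' CGB a b = {x ∈ tD (a, b) | 0 ≤ x.1 ∧ 0 ≤ x.2} := by
  rw [CGB_eq_preimage_tD b ha, Set.image_preimage_eq_inter_range, range_emb]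
  rfl

end OddFirstCoordinate

theorem CGB_as_difference_odd_general (a b : ℕ) (ha : Odd a) :
    tD (a, b) \ (tD (a, -1) ∪ tD (-1, b)) = emb '' CGB a b ∧
    tD (a, -1) ⊆ tD (a, b) ∧
    tD (-1, b) ⊆ tD (a, b) ∧
    tD (a, -1) ∩ tD (-1, b) = tD (-1, -1) := by
  have hmod : (a : ℤ) ≡ -1 [ZMOD 2] := Int.odd_iff.mp (mod_cast ha)
  have ha_le : (-1 : ℤ) ≤ a := by omega
  have hb_le : (-1 : ℤ) ≤ b := by omega
  refine ⟨?_, tD_subset_tD ⟨le_rfl, hb_le⟩ rfl, tD_subset_tD ⟨ha_le, le_rfl⟩ hmod.symm, ?_⟩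
  · rw [image_emb_CGB b ha]
    exact tD_sdiff_union_tD b (-1) hmod
  · rw [tD_inter_tD hmod, Prod.mk_inf_mk, inf_eq_right.mpr ha_le, inf_eq_left.mpr hb_le]

/-- For `a` odd: on the half-plane `c + d ≥ 0`, removing `(a,-1)+D` and
`(-1,b)+D` from `(a,b)+D` leaves exactly `C_{G/B}(a,b)`; moreover on this
half-plane the two removed translates are contained in `(a,b)+D` and are
disjoint from each other. -/
theorem CGB_as_difference_odd (a b : ℕ) (ha : Odd a) :
    ({x ∈ tD ((a : ℤ), (b : ℤ)) | 0 ≤ x.1 + x.2} \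
        (tD ((a : ℤ), -1) ∪ tD (-1, (b : ℤ)))) = emb '' CGB a b ∧
    {x ∈ tD ((a : ℤ), -1) | 0 ≤ x.1 + x.2} ⊆ tD ((a : ℤ), (b : ℤ)) ∧
    {x ∈ tD (-1, (b : ℤ)) | 0 ≤ x.1 + x.2} ⊆ tD ((a : ℤ), (b : ℤ)) ∧
    {x ∈ tD ((a : ℤ), -1) | 0 ≤ x.1 + x.2} ∩
      {x ∈ tD (-1, (b : ℤ)) | 0 ≤ x.1 + x.2} = ∅ := by
  obtain ⟨hdiff, hsnd, hfst, hinter⟩ := CGB_as_difference_odd_general a b ha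
  refine ⟨?_, (Set.sep_subset _ _).trans hsnd, (Set.sep_subset _ _).trans hfst, ?_⟩
  · have hnonneg : emb '' CGB a b ⊆ {x | 0 ≤ x.1 + x.2} := by
      rintro _ ⟨p, -, rfl⟩
      exact add_nonneg (Int.natCast_nonneg p.1) (Int.natCast_nonneg p.2)
    calc {x ∈ tD (a, b) | 0 ≤ x.1 + x.2} \ (tD (a, -1) ∪ tD (-1, b))
        = (tD (a, b) \ (tD (a, -1) ∪ tD (-1, b))) ∩ {x | 0 ≤ x.1 + x.2} :=
          Set.inter_sdiff_right_comm
      _ = emb '' CGB a b := by rw [hdiff, Set.inter_eq_left.mpr hnonneg]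
  · refine Set.eq_empty_of_forall_notMem fun x ⟨⟨hxa, hx⟩, hxb, _⟩ => ?_
    have hsum : x.1 + x.2 ≤ -1 + -1 := fst_add_snd_le_of_mem_tD (hinter.subset ⟨hxa, hxb⟩)
    omega
end

section
/- For all natural numbers a, b, n, the number of pairs (c,d) ∈ C_{G/B}(a,b) with c + d = n equals the number of pairs (c',d') ∈ C_{G/B}(b,a) with c' + d' = n. (Combinatorially, the lattice-point counts of C_{G/B} on lines of fixed c + d are symmetric in a and b, even though the region itself is not.) -/
/-!
Let `ε ∈ {0, 1}` be the parity of `a + b + n`. On the line `c + d = n`, raising `d` by `ε` restores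
`d ≡ b (mod 2)`, and the exceptional condition at `c = 0` becomes the bound `ε ≤ c`. Hence
`(c, d) ↦ (c, d + ε)` identifies the fibre with the points of the line `c + e = n + ε` satisfying
`ε ≤ c ≤ a`, `ε ≤ e ≤ b`, `c ≡ a` and `e ≡ b (mod 2)`, conditions which are symmetric under
exchanging the two coordinates together with `a` and `b`.
-/

/-- The natural numbers in `[ε, a]` with the parity of `a`: the condition that each coordinate of a
point of `CGB` satisfies once the second coordinate has been raised by `ε`. -/
def parityIcc (ε a : ℕ) : Set ℕ := {x ∈ Set.Icc ε a | x ≡ a [MOD 2]}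

theorem ncard_prod_add_eq_comm {M : Type*} [AddCommMagma M] (s t : Set M) (k : M) :
    Set.ncard {p ∈ s ×ˢ t | p.1 + p.2 = k} = Set.ncard {p ∈ t ×ˢ s | p.1 + p.2 = k} := by
  rw [← Set.ncard_image_of_injective _ Prod.swap_injective, Set.image_swap_eq_preimage_swap]
  congr 1
  ext ⟨x, y⟩
  simp only [Set.mem_preimage, Set.mem_ofPred_eq, Set.mem_prod, Prod.fst_swap, Prod.snd_swap,
    and_comm, add_comm]

theorem mem_CGB_iff_mem_parityIcc {ε a b c d : ℕ} (hε : ε < 2)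
    (hparity : c + d + ε ≡ a + b [MOD 2]) :
    (c, d) ∈ CGB a b ↔ c ∈ parityIcc ε a ∧ d + ε ∈ parityIcc ε b := by
  simp only [CGB, Cset, parityIcc, Set.mem_ofPred_eq, Set.mem_Icc, Nat.ModEq] at hparity ⊢
  constructor
  · rintro ⟨⟨hc, hzero⟩, hca, hdb⟩
    have hd : (d + ε) % 2 = b % 2 := by omega
    have hεc : ε ≤ c := by omega
    have hdεb : d + ε ≤ b := by omega
    exact ⟨⟨⟨hεc, hca⟩, hc⟩, ⟨Nat.le_add_left ε d, hdεb⟩, hd⟩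
  · rintro ⟨⟨⟨hεc, hca⟩, hc⟩, ⟨-, hdεb⟩, hd⟩
    have hzero : c = 0 → d % 2 = b % 2 := by
      rintro rfl
      obtain rfl : ε = 0 := Nat.le_zero.mp hεc
      exact hd
    exact ⟨⟨hc, hzero⟩, hca, (Nat.le_add_right d ε).trans hdεb⟩

theorem image_add_snd_CGB_fiber {ε a b n : ℕ} (hε : ε < 2) (hparity : n + ε ≡ a + b [MOD 2]) :
    (fun p : ℕ × ℕ ↦ (p.1, p.2 + ε)) '' {p ∈ CGB a b | p.1 + p.2 = n} =
      {p ∈ parityIcc ε a ×ˢ parityIcc ε b | p.1 + p.2 = n + ε} := by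
  ext ⟨c, e⟩
  constructor
  · rintro ⟨⟨c, d⟩, ⟨hmem, rfl⟩, ⟨⟩⟩
    exact ⟨(mem_CGB_iff_mem_parityIcc hε hparity).mp hmem, (add_assoc c d ε).symm⟩
  · rintro ⟨⟨hc, he⟩, hsum⟩
    obtain ⟨d, rfl⟩ := Nat.exists_eq_add_of_le' he.1.1
    obtain rfl : c + d = n := by simpa only [← add_assoc, Nat.add_right_cancel_iff] using hsum
    exact ⟨(c, d), ⟨(mem_CGB_iff_mem_parityIcc hε hparity).mpr ⟨hc, he⟩, rfl⟩, rfl⟩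

theorem ncard_CGB_fiber_s13 {ε a b n : ℕ} (hε : ε < 2) (hparity : n + ε ≡ a + b [MOD 2]) :
    Set.ncard {p ∈ CGB a b | p.1 + p.2 = n} =
      Set.ncard {p ∈ parityIcc ε a ×ˢ parityIcc ε b | p.1 + p.2 = n + ε} := by
  rw [← image_add_snd_CGB_fiber hε hparity, Set.ncard_image_of_injective]
  exact Function.injective_id.prodMap (add_left_injective ε)

/-- The lattice-point counts of `C_{G/B}` on lines of fixed `c + d` are
symmetric in `a` and `b`. -/
theorem CGB_fiber_card_symm (a b n : ℕ) :
    Set.ncard {p ∈ CGB a b | p.1 + p.2 = n} =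
      Set.ncard {p ∈ CGB b a | p.1 + p.2 = n} := by
  obtain ⟨ε, hε, hparity⟩ : ∃ ε < 2, n + ε ≡ a + b [MOD 2] :=
    ⟨(a + b + n) % 2, Nat.mod_lt _ two_pos, by unfold Nat.ModEq; omega⟩
  calc
    _ = Set.ncard {p ∈ parityIcc ε a ×ˢ parityIcc ε b | p.1 + p.2 = n + ε} :=
      ncard_CGB_fiber_s13 hε hparity
    _ = Set.ncard {p ∈ parityIcc ε b ×ˢ parityIcc ε a | p.1 + p.2 = n + ε} :=
      ncard_prod_add_eq_comm _ _ _
    _ = _ := (ncard_CGB_fiber_s13 hε (add_comm a b ▸ hparity)).symm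
end
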